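/- For every integer n ≥ 1 there exist a constant C_n > 0 and λ₀ ∈ (0,1] such that for all λ ∈ (0,λ₀) and all (x,p) ∈ ℝ², V_{λ,n}(x,p) ≤ C_n·(1 + λ|p|). -/

import Mathlib

open MeasureTheory Real

/-- Standard Gaussian density. -/
noncomputable def gauss (q : ℝ) : ℝ := (Real.sqrt (2 * Real.pi))⁻¹ * Real.exp (-q ^ 2 / 2)

/-- The constant η = (1/16)·√(π/2). -/
noncomputable def eta : ℝ := (1 / 16) * Real.sqrt (Real.pi / 2)

/-- Collision jump-rate kernel. -/
noncomputable def Jker (lam p p' : ℝ) : ℝ :=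
  (eta * (1 + lam) / 2) * |p' - p| * gauss (((1 - lam) / 2) * p' - ((1 + lam) / 2) * p)

/-- Escape rate. -/
noncomputable def Esc (lam p : ℝ) : ℝ := ∫ p' : ℝ, Jker lam p p'

/-- The Hamiltonian H(x,p) = p²/2 + V(x). -/
noncomputable def Ham (V : ℝ → ℝ) (x p : ℝ) : ℝ := p ^ 2 / 2 + V x

/-- A_λ(x,p): expected jump of √2·H^{1/2} under the kernel. -/
noncomputable def Afun (V : ℝ → ℝ) (lam x p : ℝ) : ℝ :=
  ∫ p' : ℝ,
    (Real.sqrt 2 * Real.sqrt (Ham V x p') - Real.sqrt 2 * Real.sqrt (Ham V x p)) *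
      Jker lam p p'

/-- V_{λ,n}(x,p): the 2n-th centered jump moment of √2·H^{1/2}. -/
noncomputable def Vfun (V : ℝ → ℝ) (lam : ℝ) (n : ℕ) (x p : ℝ) : ℝ :=
  ∫ p' : ℝ,
    (Real.sqrt 2 * Real.sqrt (Ham V x p') - Real.sqrt 2 * Real.sqrt (Ham V x p) -
        Afun V lam x p / Esc lam p) ^ (2 * n) * Jker lam p p'

/-!
Integrating against the collision kernel `J_λ(p, ·)` as a finite measure, `V_{λ,n}(x, p)` is a
centered `2n`-th moment of `√2 H(x, ·)^{1/2}`, and by Jensen's inequality a centered moment is at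
most `2^{2n}` times the moment about any other point. Since `p' ↦ √(p'² + 2V(x))` is `1`-Lipschitz,
the value at `b = (1 + λ) / (1 - λ) p`, where the Gaussian factor of the kernel is centered, leaves
only `∫ |p' - b|^{2n} J_λ(p, p') dp'`. There `|p' - p| ≤ |p' - b| + |b - p|` with
`b - p = 2λp / (1 - λ)`, so Gaussian moments yield a bound linear in `1 + λ|p|`.
-/

section CentralMoments

variable {α : Type*} [MeasurableSpace α] {μ : Measure α} [IsFiniteMeasure μ]

lemma integral_sub_average_pow_le {X : α → ℝ} {k : ℕ} (hk : Even k) (c : ℝ)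
    (hX : Integrable X μ) (hX_pow : Integrable (fun a ↦ (X a - c) ^ k) μ) :
    ∫ a, (X a - ⨍ a', X a' ∂μ) ^ k ∂μ ≤ 2 ^ k * ∫ a, (X a - c) ^ k ∂μ := by
  obtain rfl | hk0 := eq_or_ne k 0
  · simp
  obtain rfl | hμ := eq_or_ne μ 0
  · simp
  have : NeZero μ := ⟨hμ⟩
  have hXc : Integrable (fun a ↦ X a - c) μ := hX.sub (integrable_const c)
  have average_sub : ⨍ a, (X a - c) ∂μ = ⨍ a, X a ∂μ - c := by
    simp only [average]
    rw [integral_sub hX.to_average (integrable_const c), integral_const, probReal_univ, one_smul]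
  have jensen : (⨍ a, X a ∂μ - c) ^ k ≤ ⨍ a, (X a - c) ^ k ∂μ := by
    rw [← average_sub]
    exact hk.convexOn_pow.map_average_le (by fun_prop) isClosed_univ (by simp) hXc hX_pow
  have pointwise (a : α) : (X a - ⨍ a', X a' ∂μ) ^ k ≤
      2 ^ (k - 1) * ((X a - c) ^ k + ⨍ a', (X a' - c) ^ k ∂μ) := by
    calc (X a - ⨍ a', X a' ∂μ) ^ k = ((X a - c) + -(⨍ a', X a' ∂μ - c)) ^ k := by ring
      _ ≤ 2 ^ (k - 1) * ((X a - c) ^ k + (-(⨍ a', X a' ∂μ - c)) ^ k) := hk.add_pow_le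
      _ ≤ _ := by rw [hk.neg_pow]; gcongr
  calc ∫ a, (X a - ⨍ a', X a' ∂μ) ^ k ∂μ
      ≤ ∫ a, 2 ^ (k - 1) * ((X a - c) ^ k + ⨍ a', (X a' - c) ^ k ∂μ) ∂μ :=
        integral_mono_of_nonneg (.of_forall fun a ↦ hk.pow_nonneg _)
          ((hX_pow.add (integrable_const _)).const_mul _) (.of_forall pointwise)
    _ = 2 ^ (k - 1) * 2 * ∫ a, (X a - c) ^ k ∂μ := by
        rw [integral_const_mul, integral_add hX_pow (integrable_const _), integral_average]
        ring
    _ = 2 ^ k * ∫ a, (X a - c) ^ k ∂μ := by rw [pow_sub_one_mul hk0]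

variable [PseudoMetricSpace α] [OpensMeasurableSpace α]

lemma integrable_dist_of_integrable_dist_pow {k : ℕ} (hk : k ≠ 0) {b : α}
    (h : Integrable (fun a ↦ dist a b ^ k) μ) : Integrable (fun a ↦ dist a b) μ := by
  refine ((integrable_const 1).add h).mono'
    (continuous_id.dist continuous_const).measurable.aestronglyMeasurable (.of_forall fun a ↦ ?_)
  rw [norm_of_nonneg dist_nonneg, Pi.add_apply]
  obtain h_le | h_ge := le_total (dist a b) 1
  · exact h_le.trans (le_add_of_nonneg_right (by positivity))
  · exact (le_self_pow₀ h_ge hk).trans (le_add_of_nonneg_left zero_le_one)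

lemma integral_sub_average_pow_le_of_lipschitzWith
    {K : NNReal} {f : α → ℝ} (hf : LipschitzWith K f) {k : ℕ} (hk : Even k) (b : α)
    (hdist_pow : Integrable (fun a ↦ dist a b ^ k) μ) :
    ∫ a, (f a - ⨍ a', f a' ∂μ) ^ k ∂μ ≤ (2 * K) ^ k * ∫ a, dist a b ^ k ∂μ := by
  obtain rfl | hk0 := eq_or_ne k 0
  · simp
  have hmeas : AEStronglyMeasurable f μ := hf.continuous.measurable.aestronglyMeasurable
  have hfb (a : α) : |f a - f b| ≤ K * dist a b := hf.dist_le_mul a b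
  have hfb_pow (a : α) : (f a - f b) ^ k ≤ K ^ k * dist a b ^ k := by
    rw [← hk.pow_abs, ← mul_pow]
    gcongr
    exact hfb a
  have hf_int : Integrable f μ := by
    have hsub : Integrable (fun a ↦ f a - f b) μ :=
      ((integrable_dist_of_integrable_dist_pow hk0 hdist_pow).const_mul (K : ℝ)).mono'
        (hmeas.sub aestronglyMeasurable_const) (.of_forall hfb)
    exact (hsub.add (integrable_const (f b))).congr (.of_forall fun a ↦ sub_add_cancel _ _)
  have hf_int_pow : Integrable (fun a ↦ (f a - f b) ^ k) μ := by
    refine (hdist_pow.const_mul (K ^ k : ℝ)).mono' ((hmeas.sub aestronglyMeasurable_const).pow k)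
      (.of_forall fun a ↦ ?_)
    rw [norm_of_nonneg (hk.pow_nonneg _)]
    exact hfb_pow a
  calc ∫ a, (f a - ⨍ a', f a' ∂μ) ^ k ∂μ
      ≤ 2 ^ k * ∫ a, (f a - f b) ^ k ∂μ := integral_sub_average_pow_le hk (f b) hf_int hf_int_pow
    _ ≤ 2 ^ k * ∫ a, K ^ k * dist a b ^ k ∂μ := by
        gcongr 2 ^ k * ?_
        exact integral_mono hf_int_pow (hdist_pow.const_mul _) hfb_pow
    _ = (2 * K) ^ k * ∫ a, dist a b ^ k ∂μ := by rw [integral_const_mul, mul_pow, mul_assoc]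

end CentralMoments

lemma lipschitzWith_sqrt_sq_add {c : ℝ} (hc : 0 ≤ c) :
    LipschitzWith 1 fun r : ℝ ↦ √(r ^ 2 + c) := by
  have hnorm (r : ℝ) : √(r ^ 2 + c) = ‖(r + √c * Complex.I : ℂ)‖ := by
    rw [Complex.norm_add_mul_I, sq_sqrt hc]
  refine .of_dist_le_mul fun r s ↦ ?_
  rw [NNReal.coe_one, one_mul, dist_eq, dist_eq, hnorm, hnorm]
  refine (abs_norm_sub_norm_le _ _).trans_eq ?_
  rw [add_sub_add_right_eq_sub, ← Complex.ofReal_sub, Complex.norm_real, norm_eq_abs]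

lemma lipschitzWith_sqrt_two_mul_sqrt_Ham {V : ℝ → ℝ} {x : ℝ} (hV : 0 ≤ V x) :
    LipschitzWith 1 fun r ↦ √2 * √(Ham V x r) := by
  have hsqrt (r : ℝ) : √2 * √(Ham V x r) = √(r ^ 2 + 2 * V x) := by
    rw [← sqrt_mul zero_le_two, Ham]
    ring_nf
  simpa only [hsqrt] using lipschitzWith_sqrt_sq_add (mul_nonneg zero_le_two hV)

lemma gauss_nonneg (q : ℝ) : 0 ≤ gauss q := by
  unfold gauss; positivity

@[fun_prop]
lemma continuous_gauss : Continuous gauss := by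
  unfold gauss; fun_prop

/-- The `k`-th absolute moment of the standard Gaussian density. -/
noncomputable def gaussAbsMoment (k : ℕ) : ℝ := ∫ q : ℝ, |q| ^ k * gauss q

lemma gaussAbsMoment_nonneg (k : ℕ) : 0 ≤ gaussAbsMoment k :=
  integral_nonneg fun q ↦ mul_nonneg (by positivity) (gauss_nonneg q)

lemma integrable_abs_pow_mul_gauss (k : ℕ) : Integrable fun q : ℝ ↦ |q| ^ k * gauss q := by
  have hexp : Integrable fun q : ℝ ↦ q ^ (k : ℝ) * exp (-(1 / 2) * q ^ 2) :=
    integrable_rpow_mul_exp_neg_mul_sq (by norm_num) (neg_one_lt_zero.trans_le k.cast_nonneg)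
  refine (hexp.norm.const_mul (√(2 * π))⁻¹).congr (.of_forall fun q ↦ ?_)
  simp only [gauss, rpow_natCast, norm_mul, norm_pow, norm_eq_abs, abs_exp]
  ring_nf

lemma abs_sub_pow_mul_gauss_eq {s : ℝ} (hs : s ≠ 0) (k : ℕ) (b r : ℝ) :
    |r - b| ^ k * gauss (s * (r - b)) =
      |s|⁻¹ ^ k * (|s * (r - b)| ^ k * gauss (s * (r - b))) := by
  rw [← mul_assoc, ← mul_pow, abs_mul, inv_mul_cancel_left₀ (abs_ne_zero.2 hs)]

lemma integrable_abs_sub_pow_mul_gauss {s : ℝ} (hs : s ≠ 0) (k : ℕ) (b : ℝ) :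
    Integrable fun r ↦ |r - b| ^ k * gauss (s * (r - b)) := by
  simp only [abs_sub_pow_mul_gauss_eq hs]
  exact (((integrable_abs_pow_mul_gauss k).comp_mul_left' hs).comp_sub_right b).const_mul _

lemma integral_abs_sub_pow_mul_gauss {s : ℝ} (hs : s ≠ 0) (k : ℕ) (b : ℝ) :
    ∫ r, |r - b| ^ k * gauss (s * (r - b)) = |s|⁻¹ ^ (k + 1) * gaussAbsMoment k := by
  simp only [abs_sub_pow_mul_gauss_eq hs]
  rw [integral_const_mul,
    integral_sub_right_eq_self (fun r ↦ |s * r| ^ k * gauss (s * r)) b,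
    Measure.integral_comp_mul_left (fun q ↦ |q| ^ k * gauss q) s, smul_eq_mul, abs_inv,
    ← mul_assoc, ← pow_succ, gaussAbsMoment]

section CollisionKernel

variable {lam : ℝ}

lemma eta_nonneg : 0 ≤ eta := by
  unfold eta; positivity

lemma Jker_nonneg (hlam : -1 ≤ lam) (p r : ℝ) : 0 ≤ Jker lam p r := by
  have : 0 ≤ 1 + lam := by linarith
  have := gauss_nonneg ((1 - lam) / 2 * r - (1 + lam) / 2 * p)
  have := eta_nonneg
  unfold Jker; positivity

@[fun_prop]
lemma continuous_Jker (lam p : ℝ) : Continuous (Jker lam p) := by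
  unfold Jker; fun_prop

/-- The measure `J_λ(p, p') dp'` on outgoing momenta. For `λ < -1` the kernel is negative and this
is the zero measure. -/
noncomputable def collisionMeasure (lam p : ℝ) : Measure ℝ :=
  volume.withDensity fun r ↦ ENNReal.ofReal (Jker lam p r)

/-- The momentum at which the Gaussian factor of `J_λ(p, ·)` is centered. For `λ = 1` that factor is
constant and the value is junk. -/
noncomputable def collisionCenter (lam p : ℝ) : ℝ := (1 + lam) / (1 - lam) * p

lemma integral_collisionMeasure (hlam : -1 ≤ lam) (p : ℝ) (f : ℝ → ℝ) :
    ∫ r, f r ∂collisionMeasure lam p = ∫ r, f r * Jker lam p r := by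
  rw [collisionMeasure, integral_withDensity_eq_integral_toReal_smul (by fun_prop) (by simp)]
  simp only [ENNReal.toReal_ofReal (Jker_nonneg hlam p _), smul_eq_mul, mul_comm]

lemma integrable_collisionMeasure_iff (hlam : -1 ≤ lam) {p : ℝ} {f : ℝ → ℝ} :
    Integrable f (collisionMeasure lam p) ↔ Integrable fun r ↦ f r * Jker lam p r := by
  rw [collisionMeasure, integrable_withDensity_iff (by fun_prop) (by simp)]
  simp only [ENNReal.toReal_ofReal (Jker_nonneg hlam p _)]

lemma average_collisionMeasure (hlam : -1 ≤ lam) (p : ℝ) (f : ℝ → ℝ) :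
    ⨍ r, f r ∂collisionMeasure lam p = (∫ r, f r * Jker lam p r) / Esc lam p := by
  have mass : (collisionMeasure lam p).real Set.univ = Esc lam p := by
    simpa [Esc] using integral_collisionMeasure hlam p fun _ ↦ 1
  rw [average_eq, integral_collisionMeasure hlam, mass, smul_eq_mul, inv_mul_eq_div]

lemma Vfun_eq_integral_sub_average_pow (hlam : -1 ≤ lam) (V : ℝ → ℝ) (n : ℕ) (x p : ℝ) :
    Vfun V lam n x p =
      ∫ r, (√2 * √(Ham V x r) - √2 * √(Ham V x p) -
        ⨍ r', (√2 * √(Ham V x r') - √2 * √(Ham V x p)) ∂collisionMeasure lam p) ^ (2 * n)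
        ∂collisionMeasure lam p := by
  rw [integral_collisionMeasure hlam, average_collisionMeasure hlam, Vfun, Afun]

lemma Jker_eq_collisionCenter (hlam : lam < 1) (p r : ℝ) :
    Jker lam p r = eta * (1 + lam) / 2 * |r - p| *
      gauss ((1 - lam) / 2 * (r - collisionCenter lam p)) := by
  have : 1 - lam ≠ 0 := by linarith
  rw [Jker, collisionCenter]
  congr 2
  field_simp

lemma abs_sub_le_collisionCenter (hlam : lam < 1) (p r : ℝ) :
    |r - p| ≤ |r - collisionCenter lam p| + ((1 - lam) / 2)⁻¹ * |lam * p| := by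
  have hs : 0 < 1 - lam := by linarith
  have hshift : collisionCenter lam p - p = ((1 - lam) / 2)⁻¹ * (lam * p) := by
    rw [collisionCenter]
    field_simp
    ring
  calc |r - p| ≤ |r - collisionCenter lam p| + |collisionCenter lam p - p| := abs_sub_le _ _ _
    _ = _ := by rw [hshift, abs_mul, abs_of_pos (inv_pos.2 (half_pos hs))]

/-- A combination of Gaussians dominating `|r - b| ^ k * J_λ(p, r)`, where `b` is the collision
center, obtained from `|r - p| ≤ |r - b| + |b - p|`. -/
noncomputable def collisionMajorant (lam p : ℝ) (k : ℕ) (r : ℝ) : ℝ :=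
  eta * (1 + lam) / 2 *
    (|r - collisionCenter lam p| ^ (k + 1) *
        gauss ((1 - lam) / 2 * (r - collisionCenter lam p)) +
      ((1 - lam) / 2)⁻¹ * |lam * p| * (|r - collisionCenter lam p| ^ k *
        gauss ((1 - lam) / 2 * (r - collisionCenter lam p))))

lemma abs_sub_pow_mul_Jker_le (hlam₀ : -1 ≤ lam) (hlam₁ : lam < 1) (p : ℝ) (k : ℕ) (r : ℝ) :
    |r - collisionCenter lam p| ^ k * Jker lam p r ≤ collisionMajorant lam p k r := by
  have : 0 ≤ 1 + lam := by linarith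
  have := eta_nonneg
  have := gauss_nonneg ((1 - lam) / 2 * (r - collisionCenter lam p))
  rw [Jker_eq_collisionCenter hlam₁]
  grw [abs_sub_le_collisionCenter hlam₁ p r]
  rw [collisionMajorant]
  exact le_of_eq (by ring)

lemma integrable_collisionMajorant (hlam : lam < 1) (p : ℝ) (k : ℕ) :
    Integrable (collisionMajorant lam p k) := by
  have hs : (1 - lam) / 2 ≠ 0 := by linarith
  exact ((integrable_abs_sub_pow_mul_gauss hs (k + 1) _).add
    ((integrable_abs_sub_pow_mul_gauss hs k _).const_mul _)).const_mul _

lemma integral_collisionMajorant (hlam : lam < 1) (p : ℝ) (k : ℕ) :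
    ∫ r, collisionMajorant lam p k r = eta * (1 + lam) / 2 * ((1 - lam) / 2)⁻¹ ^ (k + 2) *
      (gaussAbsMoment (k + 1) + |lam * p| * gaussAbsMoment k) := by
  have hs : 0 < (1 - lam) / 2 := by linarith
  simp only [collisionMajorant]
  rw [integral_const_mul, integral_add (integrable_abs_sub_pow_mul_gauss hs.ne' _ _)
      ((integrable_abs_sub_pow_mul_gauss hs.ne' _ _).const_mul _), integral_const_mul,
    integral_abs_sub_pow_mul_gauss hs.ne', integral_abs_sub_pow_mul_gauss hs.ne', abs_of_pos hs]
  ring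

lemma integrable_dist_collisionCenter_pow (hlam₀ : -1 ≤ lam) (hlam₁ : lam < 1) (p : ℝ) (k : ℕ) :
    Integrable (fun r ↦ dist r (collisionCenter lam p) ^ k) (collisionMeasure lam p) := by
  rw [integrable_collisionMeasure_iff hlam₀]
  refine (integrable_collisionMajorant hlam₁ p k).mono' (by fun_prop) (.of_forall fun r ↦ ?_)
  rw [norm_of_nonneg (mul_nonneg (by positivity) (Jker_nonneg hlam₀ p r))]
  exact abs_sub_pow_mul_Jker_le hlam₀ hlam₁ p k r

lemma isFiniteMeasure_collisionMeasure (hlam₀ : -1 ≤ lam) (hlam₁ : lam < 1) (p : ℝ) :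
    IsFiniteMeasure (collisionMeasure lam p) := by
  simpa [integrable_const_iff] using integrable_dist_collisionCenter_pow hlam₀ hlam₁ p 0

lemma integral_dist_collisionCenter_pow_le (hlam₀ : -1 ≤ lam) (hlam₁ : lam < 1) (p : ℝ) (k : ℕ) :
    ∫ r, dist r (collisionCenter lam p) ^ k ∂collisionMeasure lam p ≤
      eta * (1 + lam) / 2 * ((1 - lam) / 2)⁻¹ ^ (k + 2) *
        (gaussAbsMoment (k + 1) + |lam * p| * gaussAbsMoment k) := by
  rw [integral_collisionMeasure hlam₀, ← integral_collisionMajorant hlam₁]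
  exact integral_mono
    ((integrable_collisionMeasure_iff hlam₀).1
      (integrable_dist_collisionCenter_pow hlam₀ hlam₁ p k))
    (integrable_collisionMajorant hlam₁ p k) (abs_sub_pow_mul_Jker_le hlam₀ hlam₁ p k)

end CollisionKernel

lemma Vfun_le_gaussAbsMoment {V : ℝ → ℝ} {lam x : ℝ} (hlam₀ : -1 ≤ lam) (hlam₁ : lam < 1)
    (hV : 0 ≤ V x) (n : ℕ) (p : ℝ) :
    Vfun V lam n x p ≤ 2 ^ (2 * n) * (eta * (1 + lam) / 2 * ((1 - lam) / 2)⁻¹ ^ (2 * n + 2) *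
      (gaussAbsMoment (2 * n + 1) + |lam * p| * gaussAbsMoment (2 * n))) := by
  have := isFiniteMeasure_collisionMeasure hlam₀ hlam₁ p
  have hlip : LipschitzWith 1 fun r ↦ √2 * √(Ham V x r) - √2 * √(Ham V x p) := by
    simpa using (lipschitzWith_sqrt_two_mul_sqrt_Ham hV).sub (.const (√2 * √(Ham V x p)))
  rw [Vfun_eq_integral_sub_average_pow hlam₀]
  grw [integral_sub_average_pow_le_of_lipschitzWith hlip (even_two_mul n)
      (collisionCenter lam p) (integrable_dist_collisionCenter_pow hlam₀ hlam₁ p (2 * n)),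
    integral_dist_collisionCenter_pow_le hlam₀ hlam₁]
  simp

theorem stmt_11_general (n : ℕ) {lam₀ : ℝ} (hlam₀ : lam₀ < 1) :
    ∃ C : ℝ, 0 < C ∧ ∀ lam ∈ Set.Icc 0 lam₀, ∀ (V : ℝ → ℝ) (x p : ℝ), 0 ≤ V x →
      Vfun V lam n x p ≤ C * (1 + lam * |p|) := by
  set M₀ := gaussAbsMoment (2 * n)
  set M₁ := gaussAbsMoment (2 * n + 1)
  have hM₀ : 0 ≤ M₀ := gaussAbsMoment_nonneg _
  have hM₁ : 0 ≤ M₁ := gaussAbsMoment_nonneg _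
  have hη := eta_nonneg
  have : 0 < (1 - lam₀) / 2 := by linarith
  set B := 2 ^ (2 * n) * (eta * ((1 - lam₀) / 2)⁻¹ ^ (2 * n + 2))
  refine ⟨B * (M₁ + M₀) + 1, by positivity, fun lam ⟨hlam, hle⟩ V x p hV ↦ ?_⟩
  have hs : 0 < (1 - lam) / 2 := by linarith
  have rate_le : eta * (1 + lam) / 2 ≤ eta := by nlinarith
  have moments_le : M₁ + |lam * p| * M₀ ≤ (M₁ + M₀) * (1 + lam * |p|) := by
    rw [abs_mul, abs_of_nonneg hlam]
    nlinarith [mul_nonneg (mul_nonneg hlam (abs_nonneg p)) hM₁]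
  calc Vfun V lam n x p
      ≤ 2 ^ (2 * n) * (eta * (1 + lam) / 2 * ((1 - lam) / 2)⁻¹ ^ (2 * n + 2) *
          (M₁ + |lam * p| * M₀)) := Vfun_le_gaussAbsMoment (by linarith) (by linarith) hV n p
    _ ≤ 2 ^ (2 * n) * (eta * ((1 - lam₀) / 2)⁻¹ ^ (2 * n + 2) *
          ((M₁ + M₀) * (1 + lam * |p|))) := by gcongr
    _ = B * (M₁ + M₀) * (1 + lam * |p|) := by ring
    _ ≤ (B * (M₁ + M₀) + 1) * (1 + lam * |p|) := by gcongr; linarith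

theorem stmt_11 (V : ℝ → ℝ) (hV : ContDiff ℝ 1 V) (hVpos : ∀ x, 0 ≤ V x)
    (hVper : Function.Periodic V 1) :
    ∀ n : ℕ, 1 ≤ n → ∃ C : ℝ, 0 < C ∧ ∃ lam₀ ∈ Set.Ioc (0 : ℝ) 1,
      ∀ lam : ℝ, 0 < lam → lam < lam₀ → ∀ x p : ℝ,
        Vfun V lam n x p ≤ C * (1 + lam * |p|) := by
  intro n _
  obtain ⟨C, hC, hbound⟩ := stmt_11_general n (lam₀ := 1 / 2) (by norm_num)
  exact ⟨C, hC, 1 / 2, by norm_num, fun lam h0 h1 x p ↦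
    hbound lam ⟨h0.le, h1.le⟩ V x p (hVpos x)⟩
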